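/- arXiv:2504.05678 — 3 statements merged into one kernel-verified Lean document; each statement's English description precedes it below -/
import Mathlib

section
/- Let n ≥ 3 and let < be a linear order on the set of objects O. For every profile P ∈ D_<^n of single-peaked preferences, the designator allocation D(P) satisfies dynamic individual rationality: for every agent i, if D_i(P) is determined in Stage I then D_i(P) R_i o_i; and if D_i(P) is determined at Step s of Stage II, then D_i(P) R_i m̄^k(i) for every k = 0, 1, …, s−1, where m̄^k is the sub-allocation held after Step k of the designator algorithm at P. -/
/-!
While agent `i` is still present, let `h` be an object she held at some step `k`. The invariant
(`Secured`) is that either her current object is weakly better than `h`, or she is *locked*: her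
best remaining object `b` is weakly better than `h`, lies weakly below her current object, and
every agent holding an object weakly above `b` and strictly below hers wants an object strictly
above the one held.

* Everybody holding an object below the leaver's wants something strictly larger, so crawling to
  the adjacent object moves towards the peak and is an improvement (`sp_improve`).
* A designated agent jumps up to the leaver's object. If this does not overshoot her best remaining
  object, the jump is an improvement by single-peakedness; if it does overshoot, she becomes locked.
* A locked agent stays locked until she leaves, because any other agent who leaves first holds,
  and hence takes, an object strictly below `b`, and only objects below `b` change hands.

When `i` leaves she receives her best remaining object, so in both cases it is weakly better than
`h`. Crawling and designating are treated at once: with `z` the leaver's object in the first case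
and the designated agent's object in the second, both updates are the same map `shift` on objects,
which, away from the leaver's object, is injective and misses the object taken (`shift_inj`,
`shift_ne_taken`).
-/

/-- A preference is a strict linear order on the objects `Fin n`, encoded by its
rank function: `p o < p o'` means object `o` is strictly preferred to `o'`. -/
abbrev Pref (n : ℕ) := Fin n ≃ Fin n

/-- `o` is strictly preferred to `o'` under `p`. -/
def prefers {n : ℕ} (p : Pref n) (o o' : Fin n) : Prop := p o < p o'

/-- `o` is weakly preferred to `o'` under `p` (i.e. `o P o'` or `o = o'`). -/
def weakPref {n : ℕ} (p : Pref n) (o o' : Fin n) : Prop := p o ≤ p o'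

/-- The top-ranked object `r_1(p)`. -/
def topObj {n : ℕ} [NeZero n] (p : Pref n) : Fin n := p.symm 0

/-- The second-ranked object `r_2(p)`. -/
def secondObj {n : ℕ} [NeZero n] (p : Pref n) : Fin n := p.symm 1

/-- The `p`-best object of a (nonempty) finite set `S`: `max^p S`. -/
noncomputable def best {n : ℕ} [NeZero n] (p : Pref n) (S : Finset (Fin n)) : Fin n :=
  (S.toList.argmin (fun o => p o)).getD 0

/-- A profile belongs to the domain `D` coordinatewise. -/
def inD {n : ℕ} (D : Set (Pref n)) (P : Fin n → Pref n) : Prop := ∀ i, P i ∈ D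

/-- Individual rationality of an allocation at a profile: each agent `i` weakly
prefers her assigned object to her endowment `o_i = i`. -/
def IRAt {n : ℕ} (P : Fin n → Pref n) (m : Fin n → Fin n) : Prop :=
  ∀ i, weakPref (P i) (m i) i

/-- `m'` Pareto dominates `m` at profile `P`. -/
def ParetoDom {n : ℕ} (P : Fin n → Pref n) (m' m : Fin n → Fin n) : Prop :=
  (∀ i, weakPref (P i) (m' i) (m i)) ∧ ∃ j, prefers (P j) (m' j) (m j)

/-- Pareto efficiency of an allocation at a profile. -/
def EffAt {n : ℕ} (P : Fin n → Pref n) (m : Fin n → Fin n) : Prop :=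
  ¬ ∃ m' : Fin n → Fin n, Function.Bijective m' ∧ ParetoDom P m' m

/-- A rule maps profiles from the domain to allocations (bijections `N → O`). -/
def IsRule {n : ℕ} (D : Set (Pref n)) (f : (Fin n → Pref n) → (Fin n → Fin n)) : Prop :=
  ∀ P, inD D P → Function.Bijective (f P)

def Efficient {n : ℕ} (D : Set (Pref n)) (f : (Fin n → Pref n) → (Fin n → Fin n)) : Prop :=
  ∀ P, inD D P → EffAt P (f P)

def IndRational {n : ℕ} (D : Set (Pref n)) (f : (Fin n → Pref n) → (Fin n → Fin n)) : Prop :=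
  ∀ P, inD D P → IRAt P (f P)

def StrategyProof {n : ℕ} (D : Set (Pref n)) (f : (Fin n → Pref n) → (Fin n → Fin n)) : Prop :=
  ∀ P, inD D P → ∀ i, ∀ p' ∈ D, weakPref (P i) (f P i) (f (Function.update P i p') i)

/-- The active agents at profile `P` (those whose top object differs from their
endowment); since `o_i = i`, the set of active objects coincides with it. -/
def activeAgents {n : ℕ} [NeZero n] (P : Fin n → Pref n) : Finset (Fin n) :=
  Finset.univ.filter (fun i => topObj (P i) ≠ i)

/-- Agent `i` is the acclaimed agent at profile `P`. -/
def acclaimed {n : ℕ} [NeZero n] (P : Fin n → Pref n) (i : Fin n) : Prop :=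
  2 < (activeAgents P).card ∧ i ∈ activeAgents P ∧
    best (P i) (activeAgents P) ≠ i ∧
    ∀ j ∈ activeAgents P, j ≠ i → best (P j) (activeAgents P) = i

/-- Equity under unanimous acclaim. -/
def EquityUA {n : ℕ} [NeZero n] (D : Set (Pref n))
    (f : (Fin n → Pref n) → (Fin n → Fin n)) : Prop :=
  ∀ P, inD D P → ∀ i, acclaimed P i → f P i = best (P i) (activeAgents P)

/-- Agents `i` and `j` form the acclaimed pair at profile `P`. -/
def acclaimedPair {n : ℕ} [NeZero n] (P : Fin n → Pref n) (i j : Fin n) : Prop :=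
  ∃ Ni Nj : Finset (Fin n),
    Disjoint Ni Nj ∧ Ni ∪ Nj = activeAgents P ∧ Ni.card = Nj.card ∧ 1 < Ni.card ∧
    i ∈ Nj ∧ j ∈ Ni ∧
    (∀ l ∈ Ni, best (P l) (activeAgents P) = i) ∧
    (∀ l ∈ Nj, best (P l) (activeAgents P) = j)

/-- Equity under bipartite acclaim. -/
def EquityBA {n : ℕ} [NeZero n] (D : Set (Pref n))
    (f : (Fin n → Pref n) → (Fin n → Fin n)) : Prop :=
  ∀ P, inD D P → ∀ i j, acclaimedPair P i j → f P i = j ∨ f P j = i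

/-- Equity⁺ under bipartite acclaim. -/
def EquityPlusBA {n : ℕ} [NeZero n] (D : Set (Pref n))
    (f : (Fin n → Pref n) → (Fin n → Fin n)) : Prop :=
  ∀ P, inD D P → ∀ i j, acclaimedPair P i j → f P i = j ∧ f P j = i

/-- Single-peakedness of `p` w.r.t. the linear order on objects encoded by the
position permutation `σ` (`o < o'` iff `σ o < σ o'`). -/
def singlePeaked {n : ℕ} [NeZero n] (σ : Fin n ≃ Fin n) (p : Pref n) : Prop :=
  ∀ o o' : Fin n,
    ((σ o' < σ o ∧ σ o < σ (topObj p)) ∨ (σ (topObj p) < σ o ∧ σ o < σ o')) →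
    prefers p o o'

/-- The full single-peaked domain `D_<`. -/
def spDomain {n : ℕ} [NeZero n] (σ : Fin n ≃ Fin n) : Set (Pref n) :=
  {p | singlePeaked σ p}

/-- `D` is a single-peaked domain. -/
def IsSPDomain {n : ℕ} [NeZero n] (D : Set (Pref n)) : Prop :=
  ∃ σ : Fin n ≃ Fin n, D ⊆ spDomain σ

/-- Objects `o` and `o'` are connected in `D`: `o ∼ o'`. -/
def connectedObj {n : ℕ} [NeZero n] (D : Set (Pref n)) (o o' : Fin n) : Prop :=
  ∃ p ∈ D, ∃ p' ∈ D, topObj p = o ∧ secondObj p = o' ∧ topObj p' = o' ∧ secondObj p' = o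

/-- `D` is path-connected. -/
def pathConnected {n : ℕ} [NeZero n] (D : Set (Pref n)) : Prop :=
  ∀ o o' : Fin n, o ≠ o' → ∃ l : List (Fin n),
    l.Nodup ∧ l.head? = some o ∧ l.getLast? = some o' ∧ l.Chain' (connectedObj D)

/-- `p` and `p'` rank all objects in exactly opposite orders. -/
def reversedPair {n : ℕ} (p p' : Pref n) : Prop :=
  ∀ o o', prefers p o o' ↔ prefers p' o' o

/-- A rich domain: path-connected and containing two completely reversed preferences. -/
def richDomain {n : ℕ} [NeZero n] (D : Set (Pref n)) : Prop :=
  pathConnected D ∧ ∃ p ∈ D, ∃ p' ∈ D, reversedPair p p'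

/-- The restriction `→(x,y,z) ∈ R(D)`: whenever `x` is the best of `{x,y,z}`,
`y` is ranked above `z`. -/
def RestrR {n : ℕ} [NeZero n] (D : Set (Pref n)) (x y z : Fin n) : Prop :=
  ∀ p ∈ D, best p {x, y, z} = x → prefers p y z

/-- The ternary relation `(x,y,z) ∈ B(D)`. -/
def RelB {n : ℕ} [NeZero n] (D : Set (Pref n)) (x y z : Fin n) : Prop :=
  RestrR D x y z ∧ RestrR D z y x

/-! ### Extensive game forms and obvious strategy-proofness -/

/-- An extensive game form: a finite rooted tree of histories (lists of actions,
prefix-closed), a player function and an outcome function on terminal histories. -/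
structure GameForm (n : ℕ) where
  hist : Finset (List ℕ)
  root_mem : [] ∈ hist
  prefix_closed : ∀ h a, h ++ [a] ∈ hist → h ∈ hist
  player : List ℕ → Fin n
  outcome : List ℕ → (Fin n → Fin n)

/-- A strategy chooses an action at every history. -/
abbrev Strategy : Type := List ℕ → ℕ

/-- Terminal histories of the game form. -/
def GameForm.Terminal {n : ℕ} (Γ : GameForm n) (h : List ℕ) : Prop :=
  h ∈ Γ.hist ∧ ∀ a, h ++ [a] ∉ Γ.hist

/-- A strategy of agent `i` is valid if it always chooses a feasible action. -/
def GameForm.ValidStrat {n : ℕ} (Γ : GameForm n) (i : Fin n) (s : Strategy) : Prop :=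
  ∀ h ∈ Γ.hist, ¬ Γ.Terminal h → Γ.player h = i → h ++ [s h] ∈ Γ.hist

/-- Play from `h` under the strategy profile `s` reaches history `h'`. -/
inductive GameForm.Reaches {n : ℕ} (Γ : GameForm n) (s : Fin n → Strategy) :
    List ℕ → List ℕ → Prop
  | refl (h : List ℕ) : GameForm.Reaches Γ s h h
  | step {h h' : List ℕ} : GameForm.Reaches Γ s h h' → h' ∈ Γ.hist → ¬ Γ.Terminal h' →
      GameForm.Reaches Γ s h (h' ++ [s (Γ.player h') h'])

/-- `o` belongs to the feasible set `X_i(h, s_i)` of agent `i` at history `h`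
given her strategy `si`. -/
def GameForm.Feas {n : ℕ} (Γ : GameForm n) (i : Fin n) (h : List ℕ) (si : Strategy)
    (o : Fin n) : Prop :=
  ∃ s : Fin n → Strategy, (∀ j, Γ.ValidStrat j (s j)) ∧ s i = si ∧
    ∃ t, Γ.Reaches s h t ∧ Γ.Terminal t ∧ Γ.outcome t i = o

/-- `h` is a decision node of `i` reachable (on-path) when `i` plays `si`. -/
def GameForm.ReachableNode {n : ℕ} (Γ : GameForm n) (i : Fin n) (si : Strategy)
    (h : List ℕ) : Prop :=
  h ∈ Γ.hist ∧ ¬ Γ.Terminal h ∧ Γ.player h = i ∧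
    ∃ s : Fin n → Strategy, (∀ j, Γ.ValidStrat j (s j)) ∧ s i = si ∧ Γ.Reaches s [] h

/-- `si` obviously dominates `si'` at preference `p`: at every earliest point of
departure, the worst feasible outcome under `si` is weakly preferred to the best
feasible outcome under `si'`. -/
def GameForm.ObvDom {n : ℕ} (Γ : GameForm n) (i : Fin n) (p : Pref n)
    (si si' : Strategy) : Prop :=
  ∀ h, Γ.ReachableNode i si h → Γ.ReachableNode i si' h → si h ≠ si' h →
    ∀ o o', Γ.Feas i h si o → Γ.Feas i h si' o' → weakPref p o o'

/-- Obvious strategy-proofness of a rule `f` on domain `D`. -/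
def OSP {n : ℕ} (D : Set (Pref n)) (f : (Fin n → Pref n) → (Fin n → Fin n)) : Prop :=
  ∃ (Γ : GameForm n) (S : Fin n → Pref n → Strategy),
    (∀ i p, p ∈ D → Γ.ValidStrat i (S i p)) ∧
    (∀ i p, p ∈ D → ∀ s', Γ.ValidStrat i s' → Γ.ObvDom i p (S i p) s') ∧
    (∀ P : Fin n → Pref n, inD D P →
      ∃ t, Γ.Reaches (fun j => S j (P j)) [] t ∧ Γ.Terminal t ∧ Γ.outcome t = f P)

/-! ### The crawler, the designator, and top trading cycles -/

/-- The running state of the crawler/designator algorithms: the sub-allocation of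
objects currently held by remaining agents, and the final assignments so far. -/
structure AlgState (n : ℕ) where
  held : Fin n → Option (Fin n)
  res : Fin n → Option (Fin n)

/-- The object currently held by agent `i`. -/
def heldObj {n : ℕ} [NeZero n] (st : AlgState n) (i : Fin n) : Fin n := (st.held i).getD 0

/-- The remaining agents. -/
def remAgents {n : ℕ} (st : AlgState n) : Finset (Fin n) :=
  Finset.univ.filter (fun i => (st.held i).isSome)

/-- The remaining objects. -/
def remObjs {n : ℕ} [NeZero n] (st : AlgState n) : Finset (Fin n) :=
  (remAgents st).image (heldObj st)

/-- The object of `S` adjacently larger than `o` w.r.t. the order `σ`. -/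
noncomputable def adjLarger {n : ℕ} (σ : Fin n ≃ Fin n) (S : Finset (Fin n)) (o : Fin n) : Fin n :=
  ((S.filter (fun o' => σ o < σ o')).toList.argmin (fun o' => σ o')).getD o

/-- The agent `i^s` leaving at the current step: the remaining agent holding the
`σ`-smallest object among those whose best remaining object is weakly below their
held object. -/
noncomputable def leaver {n : ℕ} [NeZero n] (σ : Fin n ≃ Fin n) (P : Fin n → Pref n)
    (st : AlgState n) : Option (Fin n) :=
  ((remAgents st).filter
      (fun i => σ (best (P i) (remObjs st)) ≤ σ (heldObj st i))).toList.argmin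
    (fun i => σ (heldObj st i))

/-- One step of the crawler: the leaving agent takes her best remaining object,
and every remaining agent holding an object weakly above the taken object and
strictly below the leaver's object crawls to the adjacently larger object. -/
noncomputable def crawlerStep {n : ℕ} [NeZero n] (σ : Fin n ≃ Fin n) (P : Fin n → Pref n)
    (st : AlgState n) : AlgState n :=
  match leaver σ P st with
  | none => st
  | some is =>
    let taken := best (P is) (remObjs st)
    { held := fun j =>
        if j = is then none
        else if (st.held j).isSome = true ∧ σ taken ≤ σ (heldObj st j) ∧
            σ (heldObj st j) < σ (heldObj st is) then
          some (adjLarger σ (remObjs st) (heldObj st j))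
        else st.held j,
      res := Function.update st.res is (some taken) }

/-- Initially every agent holds her endowment `o_i = i`. -/
def crawlerInit (n : ℕ) : AlgState n := ⟨fun i => some i, fun _ => none⟩

/-- The crawler rule w.r.t. the object order `σ`. -/
noncomputable def crawler {n : ℕ} [NeZero n] (σ : Fin n ≃ Fin n) (P : Fin n → Pref n) :
    Fin n → Fin n :=
  fun i => (((crawlerStep σ P)^[n] (crawlerInit n)).res i).getD 0

/-- `τ(i)`: the active agent whose endowment is `max^{P_i} O_{m̄⁰}`. -/
noncomputable def desTau {n : ℕ} [NeZero n] (P : Fin n → Pref n) (i : Fin n) : Fin n :=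
  best (P i) (activeAgents P)

/-- Stage I of the designator: null agents receive their endowments and leave. -/
def desInit {n : ℕ} [NeZero n] (P : Fin n → Pref n) : AlgState n :=
  { held := fun i => if topObj (P i) = i then none else some i,
    res := fun i => if topObj (P i) = i then some i else none }

/-- One step of Stage II of the designator: the leaving agent `i^s` takes her best
remaining object; if `τ(i^s)` is remaining and holds an object weakly above the
taken object and strictly below `i^s`'s held object, then `τ(i^s)` directly
inherits `i^s`'s object and only agents below `τ(i^s)` crawl (designating);
otherwise the crawling updating applies. -/
noncomputable def desStep {n : ℕ} [NeZero n] (σ : Fin n ≃ Fin n) (P : Fin n → Pref n)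
    (st : AlgState n) : AlgState n :=
  match leaver σ P st with
  | none => st
  | some is =>
    let taken := best (P is) (remObjs st)
    let t := desTau P is
    if (st.held t).isSome = true ∧ σ taken ≤ σ (heldObj st t) ∧
        σ (heldObj st t) < σ (heldObj st is) then
      { held := fun j =>
          if j = is then none
          else if j = t then some (heldObj st is)
          else if (st.held j).isSome = true ∧ σ taken ≤ σ (heldObj st j) ∧
              σ (heldObj st j) < σ (heldObj st t) then
            some (adjLarger σ (remObjs st) (heldObj st j))
          else st.held j,
        res := Function.update st.res is (some taken) }
    else
      { held := fun j =>
          if j = is then none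
          else if (st.held j).isSome = true ∧ σ taken ≤ σ (heldObj st j) ∧
              σ (heldObj st j) < σ (heldObj st is) then
            some (adjLarger σ (remObjs st) (heldObj st j))
          else st.held j,
        res := Function.update st.res is (some taken) }

/-- The designator rule w.r.t. the object order `σ`. -/
noncomputable def designator {n : ℕ} [NeZero n] (σ : Fin n ≃ Fin n) (P : Fin n → Pref n) :
    Fin n → Fin n :=
  fun i => (((desStep σ P)^[n] (desInit P)).res i).getD 0

/-- One round of top trading cycles: every remaining agent points to the owner of
her favorite remaining object (owner of object `o` is agent `o`), and every agent
lying on a pointing cycle receives the object she points to and leaves. -/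
noncomputable def ttcStep {n : ℕ} [NeZero n] (P : Fin n → Pref n) (res : Fin n → Option (Fin n)) :
    Fin n → Option (Fin n) :=
  let rem : Finset (Fin n) := Finset.univ.filter (fun i => res i = none)
  let pt : Fin n → Fin n := fun i => best (P i) rem
  fun i =>
    match res i with
    | some o => some o
    | none =>
      if (List.range (n + 1)).any (fun k => (k != 0) && (pt^[k] i == i)) then some (pt i)
      else none

/-- The top-trading-cycle rule. -/
noncomputable def ttc {n : ℕ} [NeZero n] (P : Fin n → Pref n) : Fin n → Fin n :=
  fun i => (((ttcStep P)^[n] (fun _ => none)) i).getD 0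

/-! ### Extremal objects -/

section DesignatorLemmas

variable {n : ℕ}

theorem best_spec [NeZero n] (p : Pref n) {S : Finset (Fin n)} (hS : S.Nonempty) :
    best p S ∈ S ∧ ∀ o ∈ S, p (best p S) ≤ p o := by
  unfold best
  cases h : S.toList.argmin (fun o => p o) with
  | none =>
    rw [List.argmin_eq_none] at h
    simp at h
    exact absurd h hS.ne_empty
  | some a =>
    refine ⟨?_, fun o ho => ?_⟩
    · simpa using List.argmin_mem h
    · exact List.le_of_mem_argmin (f := fun o => p o) (Finset.mem_toList.2 ho) h

theorem best_erase [NeZero n] (p : Pref n) {S : Finset (Fin n)} {a : Fin n} (hS : S.Nonempty)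
    (ha : best p S ≠ a) : best p (S.erase a) = best p S := by
  obtain ⟨h1, h2⟩ := best_spec p hS
  have hm : best p S ∈ S.erase a := Finset.mem_erase.2 ⟨ha, h1⟩
  obtain ⟨h3, h4⟩ := best_spec p ⟨_, hm⟩
  exact p.injective (le_antisymm (h4 _ hm) (h2 _ (Finset.mem_of_mem_erase h3)))

theorem adjLarger_spec (σ : Fin n ≃ Fin n) {S : Finset (Fin n)} {o z : Fin n} (hz : z ∈ S)
    (hoz : σ o < σ z) :
    adjLarger σ S o ∈ S ∧ σ o < σ (adjLarger σ S o) ∧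
      ∀ x ∈ S, σ o < σ x → σ (adjLarger σ S o) ≤ σ x := by
  unfold adjLarger
  cases h : (S.filter (fun o' => σ o < σ o')).toList.argmin (fun o' => σ o') with
  | none =>
    rw [List.argmin_eq_none, Finset.toList_eq_nil] at h
    exact absurd (h ▸ Finset.mem_filter.2 ⟨hz, hoz⟩) (Finset.notMem_empty z)
  | some a =>
    have ha := Finset.mem_filter.1 (Finset.mem_toList.1 (List.argmin_mem h))
    refine ⟨ha.1, ha.2, fun x hx hox => ?_⟩
    exact List.le_of_mem_argmin (f := fun o' => σ o')
      (Finset.mem_toList.2 (Finset.mem_filter.2 ⟨hx, hox⟩)) h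

/-- Moving up within `S` without overshooting the best object of `S` is an improvement. -/
theorem sp_improve [NeZero n] {σ : Fin n ≃ Fin n} {p : Pref n} (hp : singlePeaked σ p)
    {S : Finset (Fin n)} {x y : Fin n} (hx : x ∈ S) (hy : y ∈ S) (hxy : σ x < σ y)
    (hyb : σ y ≤ σ (best p S)) : p y ≤ p x := by
  obtain ⟨-, h2⟩ := best_spec p ⟨x, hx⟩
  rcases hyb.eq_or_lt with h | h
  · rw [σ.injective h]
    exact h2 x hx
  rcases lt_trichotomy (σ y) (σ (topObj p)) with h3 | h3 | h3
  · exact (hp y x (Or.inl ⟨hxy, h3⟩)).le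
  · rw [σ.injective h3]
    simp [topObj]
  · -- The peak is below `y`, so `y` beats the best object of `S`.
    have h4 : p y < p (best p S) := hp y (best p S) (Or.inr ⟨h3, h⟩)
    exact absurd (h2 y hy) (not_le.2 h4)

/-! ### The reallocation map -/

/-- The map on held objects performed by one step of Stage II: `a` is the object taken, `c` the
leaver's object, and `z` the object whose holder inherits `c`. A crawling step is the case `z = c`,
in which no remaining agent other than the leaver holds `z`. -/
noncomputable def shift (σ : Fin n ≃ Fin n) (S : Finset (Fin n)) (a z c o : Fin n) : Fin n :=
  if o = z then c else if σ a ≤ σ o ∧ σ o < σ z then adjLarger σ S o else o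

/-- The three possible effects of `shift`, with the order relations each of them entails. -/
theorem shift_cases (σ : Fin n ≃ Fin n) {S : Finset (Fin n)} {a z c o : Fin n} (hz : z ∈ S) :
    (o = z ∧ shift σ S a z c o = c) ∨
    (σ a ≤ σ o ∧ σ o < σ z ∧ shift σ S a z c o = adjLarger σ S o ∧ adjLarger σ S o ∈ S ∧
      σ o < σ (adjLarger σ S o) ∧ (∀ x ∈ S, σ o < σ x → σ (adjLarger σ S o) ≤ σ x)) ∨
    ((σ o < σ a ∨ σ z < σ o) ∧ shift σ S a z c o = o) := by
  unfold shift
  by_cases h1 : o = z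
  · simp [h1]
  by_cases h2 : σ a ≤ σ o ∧ σ o < σ z
  · right; left
    obtain ⟨h3, h4, h5⟩ := adjLarger_spec σ hz h2.2
    simp only [h1, h2, and_self, if_true, if_false]
    exact ⟨trivial, trivial, trivial, h3, h4, h5⟩
  · right; right
    simp only [h1, h2, if_false, and_true]
    have h3 : σ o ≠ σ z := fun h => h1 (σ.injective h)
    by_contra! h4
    exact h2 ⟨h4.1, lt_of_le_of_ne h4.2 h3⟩

theorem shift_ne_taken (σ : Fin n ≃ Fin n) {S : Finset (Fin n)} {a z c o : Fin n} (hz : z ∈ S)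
    (haz : σ a ≤ σ z) (hzc : σ z ≤ σ c) (hoc : o ≠ c) : shift σ S a z c o ≠ a := by
  intro h
  have hoc' : σ o ≠ σ c := fun h => hoc (σ.injective h)
  have h' := congrArg σ h
  rcases shift_cases σ (a := a) (c := c) (o := o) hz with
    ⟨h1, h2⟩ | ⟨h1, h2, h3, h4, h5, h6⟩ | ⟨h1, h2⟩
  · rw [h2] at h'
    subst h1
    exact hoc' (by order)
  · rw [h3] at h'
    order
  · rw [h2] at h'
    rcases h1 with h1 | h1 <;> order

theorem shift_inj (σ : Fin n ≃ Fin n) {S : Finset (Fin n)} {a z c x y : Fin n} (hz : z ∈ S)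
    (haz : σ a ≤ σ z) (hzc : σ z ≤ σ c) (hx : x ∈ S) (hy : y ∈ S) (hxc : x ≠ c) (hyc : y ≠ c)
    (h : shift σ S a z c x = shift σ S a z c y) : x = y := by
  wlog hxy : σ x < σ y generalizing x y
  · rcases (not_lt.1 hxy).eq_or_lt with h1 | h1
    · exact (σ.injective h1).symm
    · exact (this hy hx hyc hxc h.symm h1).symm
  exfalso
  have hxc' : σ x ≠ σ c := fun h => hxc (σ.injective h)
  have hyc' : σ y ≠ σ c := fun h => hyc (σ.injective h)
  have h' := congrArg σ h
  rcases shift_cases σ (a := a) (c := c) (o := x) hz with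
    ⟨h1, h2⟩ | ⟨h1, h2, h3, h4, h5, h6⟩ | ⟨h1, h2⟩ <;>
  rcases shift_cases σ (a := a) (c := c) (o := y) hz with
    ⟨k1, k2⟩ | ⟨k1, k2, k3, k4, k5, k6⟩ | ⟨k1, k2⟩
  · subst h1; subst k1; order
  · subst h1; order
  · subst h1; rw [h2, k2] at h'; order
  · subst k1
    have := h6 y hz h2
    rw [h3, k2] at h'; order
  · have := h6 y hy hxy
    rw [h3, k3] at h'; order
  · have := h6 z hz h2
    rw [h3, k2] at h'
    rcases k1 with k1 | k1 <;> order
  · subst k1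
    rw [h2, k2] at h'; rcases h1 with h1 | h1 <;> order
  · rw [h2, k3] at h'; rcases h1 with h1 | h1 <;> order
  · rw [h2, k2] at h'; order

/-! ### One step of Stage II -/

variable [NeZero n]

theorem mem_remAgents {st : AlgState n} {i : Fin n} :
    i ∈ remAgents st ↔ (st.held i).isSome = true := by
  simp [remAgents]

theorem held_of_mem {st : AlgState n} {i : Fin n} (hi : i ∈ remAgents st) :
    st.held i = some (heldObj st i) := by
  obtain ⟨o, ho⟩ := Option.isSome_iff_exists.1 (mem_remAgents.1 hi)
  simp [heldObj, ho]

theorem heldObj_mem {st : AlgState n} {i : Fin n} (hi : i ∈ remAgents st) :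
    heldObj st i ∈ remObjs st :=
  Finset.mem_image_of_mem _ hi

theorem leaver_spec {σ : Fin n ≃ Fin n} {P : Fin n → Pref n} {st : AlgState n} {l : Fin n}
    (hl : leaver σ P st = some l) :
    l ∈ remAgents st ∧ σ (best (P l) (remObjs st)) ≤ σ (heldObj st l) ∧
      ∀ j ∈ remAgents st, σ (heldObj st j) < σ (heldObj st l) →
        σ (heldObj st j) < σ (best (P j) (remObjs st)) := by
  unfold leaver at hl
  have h1 := Finset.mem_filter.1 (Finset.mem_toList.1 (List.argmin_mem hl))
  refine ⟨h1.1, h1.2, fun j hj hjl => ?_⟩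
  by_contra! h2
  have h3 := List.le_of_mem_argmin (f := fun i => σ (heldObj st i))
    (Finset.mem_toList.2 (Finset.mem_filter.2 ⟨hj, h2⟩)) hl
  exact absurd hjl (not_lt.2 h3)

/-- Someone can leave as long as agents remain: the holder of the largest object qualifies. -/
theorem leaver_ne_none {σ : Fin n ≃ Fin n} {P : Fin n → Pref n} {st : AlgState n}
    (hne : (remAgents st).Nonempty) : leaver σ P st ≠ none := by
  intro h
  unfold leaver at h
  rw [List.argmin_eq_none, Finset.toList_eq_nil] at h
  obtain ⟨m, hm, hmax⟩ := Finset.exists_max_image (remAgents st) (fun i => σ (heldObj st i)) hne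
  have hb := (best_spec (P m) ⟨_, heldObj_mem hm⟩).1
  obtain ⟨j, hj, hjb⟩ := Finset.mem_image.1 hb
  have : m ∈ (∅ : Finset (Fin n)) := by
    rw [← h]
    refine Finset.mem_filter.2 ⟨hm, ?_⟩
    rw [← hjb]
    exact hmax j hj
  simp at this

/-- Both kinds of step replace the held objects of the agents who stay by their images under
`shift`. -/
theorem desStep_spec {σ : Fin n ≃ Fin n} {P : Fin n → Pref n} {st : AlgState n} {l : Fin n}
    (hinj : Set.InjOn (heldObj st) (remAgents st)) (hl : leaver σ P st = some l) :
    (desStep σ P st).res = Function.update st.res l (some (best (P l) (remObjs st))) ∧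
    ∃ z ∈ remObjs st, σ (best (P l) (remObjs st)) ≤ σ z ∧ σ z ≤ σ (heldObj st l) ∧
      remAgents (desStep σ P st) = (remAgents st).erase l ∧
      ∀ j ∈ (remAgents st).erase l, heldObj (desStep σ P st) j =
        shift σ (remObjs st) (best (P l) (remObjs st)) z (heldObj st l) (heldObj st j) := by
  obtain ⟨hlr, hlb, -⟩ := leaver_spec hl
  by_cases hd : (st.held (desTau P l)).isSome = true ∧
      σ (best (P l) (remObjs st)) ≤ σ (heldObj st (desTau P l)) ∧
      σ (heldObj st (desTau P l)) < σ (heldObj st l)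
  · have ht := mem_remAgents.2 hd.1
    have htl : desTau P l ≠ l := by
      intro h
      rw [h] at hd
      exact lt_irrefl _ hd.2.2
    have hstep : desStep σ P st =
      { held := fun j =>
          if j = l then none
          else if j = desTau P l then some (heldObj st l)
          else if (st.held j).isSome = true ∧ σ (best (P l) (remObjs st)) ≤ σ (heldObj st j) ∧
              σ (heldObj st j) < σ (heldObj st (desTau P l)) then
            some (adjLarger σ (remObjs st) (heldObj st j))
          else st.held j,
        res := Function.update st.res l (some (best (P l) (remObjs st))) } := by
      simp only [desStep, hl, if_pos hd]
    refine ⟨by rw [hstep], heldObj st (desTau P l), heldObj_mem ht, hd.2.1, hd.2.2.le, ?_, ?_⟩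
    · ext j
      rw [mem_remAgents, Finset.mem_erase, mem_remAgents, hstep]
      by_cases h1 : j = l
      · simp [h1]
      by_cases h2 : j = desTau P l
      · subst h2
        simp [h1, hd.1]
      by_cases h3 : (st.held j).isSome = true
      · simp only [h1, h2, h3, if_false]
        split_ifs <;> simp [h1, h3]
      · simp [h1, h2, h3]
    · intro j hj
      obtain ⟨h1, h3⟩ := Finset.mem_erase.1 hj
      rw [heldObj, hstep]
      by_cases h2 : j = desTau P l
      · subst h2
        simp [h1, shift]
      · have h4 : heldObj st j ≠ heldObj st (desTau P l) := fun h => h2 (hinj h3 ht h)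
        simp only [h1, h2, mem_remAgents.1 h3, if_false, true_and, shift, h4]
        split_ifs <;> simp [heldObj]
  · have hstep : desStep σ P st =
      { held := fun j =>
          if j = l then none
          else if (st.held j).isSome = true ∧ σ (best (P l) (remObjs st)) ≤ σ (heldObj st j) ∧
              σ (heldObj st j) < σ (heldObj st l) then
            some (adjLarger σ (remObjs st) (heldObj st j))
          else st.held j,
        res := Function.update st.res l (some (best (P l) (remObjs st))) } := by
      simp only [desStep, hl, if_neg hd]
    refine ⟨by rw [hstep], heldObj st l, heldObj_mem hlr, hlb, le_rfl, ?_, ?_⟩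
    · ext j
      rw [mem_remAgents, Finset.mem_erase, mem_remAgents, hstep]
      by_cases h1 : j = l
      · simp [h1]
      by_cases h3 : (st.held j).isSome = true
      · simp only [h1, h3, if_false]
        split_ifs <;> simp [h1, h3]
      · simp [h1, h3]
    · intro j hj
      obtain ⟨h1, h3⟩ := Finset.mem_erase.1 hj
      rw [heldObj, hstep]
      have h4 : heldObj st j ≠ heldObj st l := fun h => h1 (hinj h3 hlr h)
      simp only [h1, mem_remAgents.1 h3, if_false, true_and, shift, h4]
      split_ifs <;> simp [heldObj]

theorem desStep_injOn {σ : Fin n ≃ Fin n} {P : Fin n → Pref n} {st : AlgState n}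
    (hinj : Set.InjOn (heldObj st) (remAgents st)) :
    Set.InjOn (heldObj (desStep σ P st)) (remAgents (desStep σ P st)) := by
  cases hl : leaver σ P st with
  | none => simpa [desStep, hl] using hinj
  | some l =>
    obtain ⟨-, z, hz, h1, h2, h3, h4⟩ := desStep_spec hinj hl
    have hlr := (leaver_spec hl).1
    intro i hi j hj hij
    rw [h3] at hi hj
    have hi' := Finset.mem_erase.1 (Finset.mem_coe.1 hi)
    have hj' := Finset.mem_erase.1 (Finset.mem_coe.1 hj)
    rw [h4 i hi, h4 j hj] at hij
    refine hinj hi'.2 hj'.2 (shift_inj σ hz h1 h2 (heldObj_mem hi'.2) (heldObj_mem hj'.2) ?_ ?_ hij)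
    · exact fun h => hi'.1 (hinj hi'.2 hlr h)
    · exact fun h => hj'.1 (hinj hj'.2 hlr h)

/-- The image of `shift` avoids the object taken, so by counting it is everything else. -/
theorem desStep_remObjs {σ : Fin n ≃ Fin n} {P : Fin n → Pref n} {st : AlgState n} {l : Fin n}
    (hinj : Set.InjOn (heldObj st) (remAgents st)) (hl : leaver σ P st = some l) :
    remObjs (desStep σ P st) = (remObjs st).erase (best (P l) (remObjs st)) := by
  obtain ⟨-, z, hz, h1, h2, h3, h4⟩ := desStep_spec hinj hl
  have hlr := (leaver_spec hl).1
  apply Finset.eq_of_subset_of_card_le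
  · intro o ho
    obtain ⟨j, hj, rfl⟩ := Finset.mem_image.1 ho
    rw [h3] at hj
    have hj' := Finset.mem_erase.1 hj
    rw [h4 j hj]
    refine Finset.mem_erase.2 ⟨shift_ne_taken σ hz h1 h2 fun h => hj'.1 (hinj hj'.2 hlr h), ?_⟩
    rcases shift_cases σ (a := best (P l) (remObjs st)) (c := heldObj st l) (o := heldObj st j) hz
      with ⟨-, k⟩ | ⟨-, -, k, k', -⟩ | ⟨-, k⟩
    · rw [k]; exact heldObj_mem hlr
    · rw [k]; exact k'
    · rw [k]; exact heldObj_mem hj'.2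
  · rw [Finset.card_erase_of_mem (best_spec (P l) ⟨z, hz⟩).1]
    unfold remObjs
    rw [Finset.card_image_of_injOn hinj, Finset.card_image_of_injOn (desStep_injOn hinj), h3,
      Finset.card_erase_of_mem hlr]

/-! ### The invariant -/

/-- Agent `i` is locked: her best remaining object `b` lies weakly below the object she holds, and
every agent holding an object in between (weakly above `b`, strictly below hers) wants an object
strictly above the one held, so nobody in that range leaves before `i` takes `b`. -/
def Locked (σ : Fin n ≃ Fin n) (P : Fin n → Pref n) (st : AlgState n) (i : Fin n) : Prop :=
  σ (best (P i) (remObjs st)) ≤ σ (heldObj st i) ∧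
  ∀ j ∈ remAgents st, σ (best (P i) (remObjs st)) ≤ σ (heldObj st j) →
    σ (heldObj st j) < σ (heldObj st i) → σ (heldObj st j) < σ (best (P j) (remObjs st))

/-- Agent `i` is guaranteed an object weakly better than `h` when she leaves. -/
def Secured (σ : Fin n ≃ Fin n) (P : Fin n → Pref n) (h : Fin n) (st : AlgState n)
    (i : Fin n) : Prop :=
  P i (heldObj st i) ≤ P i h ∨ (Locked σ P st i ∧ P i (best (P i) (remObjs st)) ≤ P i h)

theorem Secured.best_le {σ : Fin n ≃ Fin n} {P : Fin n → Pref n} {h : Fin n} {st : AlgState n}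
    {i : Fin n} (hi : i ∈ remAgents st) (hs : Secured σ P h st i) :
    P i (best (P i) (remObjs st)) ≤ P i h := by
  rcases hs with hs | hs
  · exact ((best_spec (P i) ⟨_, heldObj_mem hi⟩).2 _ (heldObj_mem hi)).trans hs
  · exact hs.2

theorem Locked.step {σ : Fin n ≃ Fin n} {P : Fin n → Pref n} {st : AlgState n} {l i : Fin n}
    (hinj : Set.InjOn (heldObj st) (remAgents st)) (hl : leaver σ P st = some l)
    (hi : i ∈ remAgents st) (hil : i ≠ l) (hk : Locked σ P st i) :
    Locked σ P (desStep σ P st) i ∧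
      best (P i) (remObjs (desStep σ P st)) = best (P i) (remObjs st) := by
  obtain ⟨-, z, hz, h1, h2, h3, h4⟩ := desStep_spec hinj hl
  obtain ⟨hlr, hlb, hlmin⟩ := leaver_spec hl
  obtain ⟨k1, k2⟩ := hk
  have hne : (remObjs st).Nonempty := ⟨z, hz⟩
  have hli : σ (heldObj st l) < σ (heldObj st i) := by
    by_contra! h
    rcases h.eq_or_lt with h | h
    · exact hil (hinj hi hlr (σ.injective h))
    · exact absurd (hlmin i hi h) (not_lt.2 k1)
  have hlk : σ (heldObj st l) < σ (best (P i) (remObjs st)) := by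
    by_contra! h
    exact absurd (k2 l hlr h hli) (not_lt.2 hlb)
  have hbest : ∀ j, σ (heldObj st l) < σ (best (P j) (remObjs st)) →
      best (P j) (remObjs (desStep σ P st)) = best (P j) (remObjs st) := by
    intro j hj
    rw [desStep_remObjs hinj hl]
    refine best_erase _ hne fun h => ?_
    rw [h] at hj
    order
  -- An agent holding something above the leaver's object after the step held it before.
  have hsame : ∀ j ∈ (remAgents st).erase l, σ (heldObj st l) < σ (heldObj (desStep σ P st) j) →
      heldObj (desStep σ P st) j = heldObj st j := by
    intro j hj hlt
    rw [h4 j hj] at hlt ⊢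
    rcases shift_cases σ (a := best (P l) (remObjs st)) (c := heldObj st l) (o := heldObj st j) hz
      with ⟨-, q⟩ | ⟨q1, q2, q3, -, -, q4⟩ | ⟨-, q⟩
    · rw [q] at hlt; order
    · have := q4 z hz q2
      rw [q3] at hlt; order
    · exact q
  have hi' : i ∈ (remAgents st).erase l := Finset.mem_erase.2 ⟨hil, hi⟩
  have hhi : heldObj (desStep σ P st) i = heldObj st i := by
    rw [h4 i hi']
    rcases shift_cases σ (a := best (P l) (remObjs st)) (c := heldObj st l) (o := heldObj st i) hz
      with ⟨q, -⟩ | ⟨q1, q2, -⟩ | ⟨-, q⟩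
    · rw [q] at hli; order
    · order
    · exact q
  refine ⟨⟨?_, ?_⟩, hbest i hlk⟩
  · rw [hbest i hlk, hhi]; exact k1
  · intro j hj hj1 hj2
    rw [h3] at hj
    rw [hbest i hlk] at hj1
    rw [hhi] at hj2
    have e := hsame j hj (by order)
    rw [e] at hj1 hj2 ⊢
    have := k2 j (Finset.mem_of_mem_erase hj) hj1 hj2
    rw [hbest j (by order)]
    exact this

theorem Secured.step {σ : Fin n ≃ Fin n} {P : Fin n → Pref n} (hP : inD (spDomain σ) P)
    {h : Fin n} {st : AlgState n} {l i : Fin n}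
    (hinj : Set.InjOn (heldObj st) (remAgents st)) (hl : leaver σ P st = some l)
    (hi : i ∈ remAgents st) (hil : i ≠ l) (hs : Secured σ P h st i) :
    Secured σ P h (desStep σ P st) i := by
  rcases hs with hs | ⟨hk, hb⟩
  swap
  · obtain ⟨hk', e⟩ := hk.step hinj hl hi hil
    exact Or.inr ⟨hk', by rwa [e]⟩
  obtain ⟨-, z, hz, h1, h2, h3, h4⟩ := desStep_spec hinj hl
  obtain ⟨hlr, hlb, hlmin⟩ := leaver_spec hl
  have hne : (remObjs st).Nonempty := ⟨z, hz⟩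
  have hi' : i ∈ (remAgents st).erase l := Finset.mem_erase.2 ⟨hil, hi⟩
  have hsp : singlePeaked σ (P i) := hP i
  have him := heldObj_mem hi
  have e := h4 i hi'
  rcases shift_cases σ (a := best (P l) (remObjs st)) (c := heldObj st l) (o := heldObj st i) hz
    with ⟨q1, q2⟩ | ⟨q1, q2, q3, q4, q5, q6⟩ | ⟨-, q⟩
  · -- Agent `i` is designated.
    rw [q2] at e
    have hil' : σ (heldObj st i) ≠ σ (heldObj st l) :=
      fun h => hil (hinj hi hlr (σ.injective h))
    have hlt : σ (heldObj st i) < σ (heldObj st l) := by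
      rw [← q1] at h2; order
    have hbi := hlmin i hi hlt
    rcases le_or_gt (σ (heldObj st l)) (σ (best (P i) (remObjs st))) with c | c
    · left
      rw [e]
      exact (sp_improve hsp him (heldObj_mem hlr) hlt c).trans hs
    · -- The jump overshoots her best remaining object.
      right
      have hbest : ∀ j, σ z < σ (best (P j) (remObjs st)) →
          best (P j) (remObjs (desStep σ P st)) = best (P j) (remObjs st) := by
        intro j hj
        rw [desStep_remObjs hinj hl]
        refine best_erase _ hne fun h => ?_
        rw [h] at hj
        order
      have ei := hbest i (by rw [← q1]; exact hbi)
      refine ⟨⟨?_, ?_⟩, ?_⟩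
      · rw [ei, e]; exact c.le
      · intro j hj hj1 hj2
        rw [h3] at hj
        rw [ei] at hj1
        rw [e] at hj2
        have ej : heldObj (desStep σ P st) j = heldObj st j := by
          rw [h4 j hj] at hj1 hj2 ⊢
          rcases shift_cases σ (a := best (P l) (remObjs st)) (c := heldObj st l)
            (o := heldObj st j) hz with ⟨-, r⟩ | ⟨r1, r2, r3, -, -, r4⟩ | ⟨-, r⟩
          · rw [r] at hj2; order
          · have := r4 z hz r2
            rw [r3] at hj1
            rw [q1] at hbi
            order
          · exact r
        rw [ej] at hj1 hj2 ⊢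
        have := hlmin j (Finset.mem_of_mem_erase hj) hj2
        rw [hbest j (by rw [← q1]; order)]
        exact this
      · rw [ei]
        exact ((best_spec (P i) hne).2 _ him).trans hs
  · -- Agent `i` crawls.
    left
    rw [e, q3]
    have hbi := hlmin i hi (by order)
    exact (sp_improve hsp him q4 q5 (q6 _ (best_spec (P i) hne).1 hbi)).trans hs
  · left
    rw [e, q]
    exact hs

/-! ### The run of the algorithm -/

theorem injOn_iterate (σ : Fin n ≃ Fin n) (P : Fin n → Pref n) (k : ℕ) :
    Set.InjOn (heldObj ((desStep σ P)^[k] (desInit P)))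
      (remAgents ((desStep σ P)^[k] (desInit P))) := by
  induction k with
  | zero =>
    have key : ∀ i ∈ remAgents (desInit P), heldObj (desInit P) i = i := by
      intro i hi
      rw [mem_remAgents] at hi
      by_cases h : topObj (P i) = i
      · simp [desInit, h] at hi
      · simp [heldObj, desInit, h]
    intro i hi j hj hij
    simp only [Function.iterate_zero, id_eq] at hi hj hij
    rwa [key i hi, key j hj] at hij
  | succ k ih =>
    rw [Function.iterate_succ_apply']
    exact desStep_injOn ih

theorem card_iterate (σ : Fin n ≃ Fin n) (P : Fin n → Pref n) (k : ℕ) :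
    (remAgents ((desStep σ P)^[k] (desInit P))).card ≤ n - k := by
  induction k with
  | zero => simpa using Finset.card_le_univ (remAgents (desInit P))
  | succ k ih =>
    rw [Function.iterate_succ_apply']
    cases hl : leaver σ P ((desStep σ P)^[k] (desInit P)) with
    | none =>
      have : remAgents ((desStep σ P)^[k] (desInit P)) = ∅ := by
        by_contra hne
        exact leaver_ne_none (Finset.nonempty_iff_ne_empty.2 hne) hl
      simp [desStep, hl, this]
    | some l =>
      obtain ⟨-, z, -, -, -, h3, -⟩ := desStep_spec (injOn_iterate σ P k) hl
      rw [h3, Finset.card_erase_of_mem (leaver_spec hl).1]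
      omega

/-- An agent who has left keeps her assignment. -/
theorem res_iterate (σ : Fin n ≃ Fin n) (P : Fin n → Pref n) (i : Fin n) (k d : ℕ)
    (hi : i ∉ remAgents ((desStep σ P)^[k] (desInit P))) :
    i ∉ remAgents ((desStep σ P)^[k + d] (desInit P)) ∧
      ((desStep σ P)^[k + d] (desInit P)).res i = ((desStep σ P)^[k] (desInit P)).res i := by
  induction d with
  | zero => exact ⟨hi, rfl⟩
  | succ d ih =>
    rw [← add_assoc, Function.iterate_succ_apply']
    cases hl : leaver σ P ((desStep σ P)^[k + d] (desInit P)) with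
    | none => simpa [desStep, hl] using ih
    | some l =>
      obtain ⟨h0, z, -, -, -, h3, -⟩ := desStep_spec (injOn_iterate σ P (k + d)) hl
      have hil : i ≠ l := fun h => ih.1 (h ▸ (leaver_spec hl).1)
      rw [h3, h0, Function.update_of_ne hil]
      exact ⟨fun h => ih.1 (Finset.mem_of_mem_erase h), ih.2⟩

/-- As long as agent `i` remains, each object she has held is a secured lower bound. -/
theorem secured_iterate {σ : Fin n ≃ Fin n} {P : Fin n → Pref n} (hP : inD (spDomain σ) P)
    (i : Fin n) (k d : ℕ) (hi : i ∈ remAgents ((desStep σ P)^[k + d] (desInit P))) :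
    Secured σ P (heldObj ((desStep σ P)^[k] (desInit P)) i)
      ((desStep σ P)^[k + d] (desInit P)) i := by
  induction d with
  | zero => exact Or.inl le_rfl
  | succ d ih =>
    rw [← add_assoc, Function.iterate_succ_apply'] at hi ⊢
    cases hl : leaver σ P ((desStep σ P)^[k + d] (desInit P)) with
    | none =>
      have e : desStep σ P ((desStep σ P)^[k + d] (desInit P)) =
          (desStep σ P)^[k + d] (desInit P) := by simp [desStep, hl]
      rw [e] at hi ⊢
      exact ih hi
    | some l =>
      have hinj := injOn_iterate σ P (k + d)
      obtain ⟨-, z, -, -, -, h3, -⟩ := desStep_spec hinj hl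
      rw [h3] at hi
      obtain ⟨hil, hi⟩ := Finset.mem_erase.1 hi
      exact (ih hi).step hP hinj hl hi hil

end DesignatorLemmas

theorem designator_dynamic_IR (n : ℕ) [NeZero n] (hn : 3 ≤ n) (σ : Fin n ≃ Fin n)
    (P : Fin n → Pref n) (hP : inD (spDomain σ) P) :
    ∀ i : Fin n,
      (topObj (P i) = i → weakPref (P i) (designator σ P i) i) ∧
      (∀ s : ℕ, 0 < s →
        (((desStep σ P)^[s - 1] (desInit P)).held i).isSome = true →
        ((desStep σ P)^[s] (desInit P)).held i = none →
        ∀ k ≤ s - 1,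
          weakPref (P i) (designator σ P i)
            (heldObj ((desStep σ P)^[k] (desInit P)) i)) := by
  intro i
  constructor
  · intro htop
    have h0 : i ∉ remAgents ((desStep σ P)^[0] (desInit P)) := by
      simp [remAgents, desInit, htop]
    have h1 := (res_iterate σ P i 0 n h0).2
    rw [zero_add] at h1
    have h2 : designator σ P i = i := by
      unfold designator
      rw [h1]
      simp [desInit, htop]
    rw [h2]
    exact le_refl (P i i)
  · intro s hs hi hn' k hk
    obtain ⟨s, rfl⟩ : ∃ t, s = t + 1 := ⟨s - 1, by omega⟩
    simp only [Nat.add_sub_cancel] at hi hk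
    rw [← mem_remAgents] at hi
    have hout : i ∉ remAgents ((desStep σ P)^[s + 1] (desInit P)) := by
      rw [mem_remAgents, hn']
      simp
    -- Every step removes one agent, so `i` leaves within the `n` steps that are run.
    have hsn : s + 1 ≤ n := by
      have h1 := card_iterate σ P s
      have h2 := Finset.card_pos.2 ⟨i, hi⟩
      omega
    have hres := (res_iterate σ P i (s + 1) (n - (s + 1)) hout).2
    rw [Nat.add_sub_cancel' hsn] at hres
    have hsec := secured_iterate hP i k (s - k) (by rwa [Nat.add_sub_cancel' hk])
    rw [Nat.add_sub_cancel' hk] at hsec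
    rw [Function.iterate_succ_apply'] at hres hout
    cases hl : leaver σ P ((desStep σ P)^[s] (desInit P)) with
    | none =>
      exact absurd hi (by simpa [desStep, hl] using hout)
    | some l =>
      obtain ⟨h0, z, -, -, -, h3, -⟩ := desStep_spec (injOn_iterate σ P s) hl
      have hil : i = l := by
        by_contra h
        exact hout (h3 ▸ Finset.mem_erase.2 ⟨h, hi⟩)
      subst hil
      rw [h0, Function.update_self] at hres
      have h2 : designator σ P i = best (P i) (remObjs ((desStep σ P)^[s] (desInit P))) := by
        unfold designator
        rw [hres]
        rfl
      rw [h2]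
      exact hsec.best_le hi
end

section
/- Let N = {1,2,3,4} with objects o_1 < o_2 < o_3 < o_4, and consider the profile P of single-peaked preferences where P_1 and P_2 both rank (o_4, o_3, o_2, o_1) from best to worst and P_3 and P_4 both rank (o_1, o_2, o_3, o_4) from best to worst. Then agents 1 and 4 are the acclaimed pair at P, and the crawler allocation is C(P) = {(1, o_3), (2, o_4), (3, o_1), (4, o_2)}; in particular C_1(P) ≠ o_4 and C_4(P) ≠ o_1, so the crawler on D_<^4 violates equity under bipartite acclaim. -/
/-- The preference `(o_4, o_3, o_2, o_1)` (best to worst) as a rank function. -/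
def Q1 : Pref 4 := Fin.revPerm
/-- The preference `(o_1, o_2, o_3, o_4)` (best to worst) as a rank function. -/
def Q2 : Pref 4 := Equiv.refl (Fin 4)

/-! ### Evaluating minimizers and crawler steps -/

/-- A strict minimizer of `f` on `S` is what `argmin` finds, whatever the enumeration of `S`. -/
lemma argmin_toList {α β : Type*} [LinearOrder β] {S : Finset α} {f : α → β} {a : α}
    (ha : a ∈ S) (h : ∀ b ∈ S, b ≠ a → f a < f b) : S.toList.argmin f = some a := by
  classical
  cases hm : S.toList.argmin f with
  | none =>
    rw [List.argmin_eq_none] at hm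
    simp [Finset.toList_eq_nil.mp hm] at ha
  | some m =>
    have hmS : m ∈ S := Finset.mem_toList.mp (List.argmin_mem hm)
    have hle : f m ≤ f a := List.le_of_mem_argmin (Finset.mem_toList.mpr ha) hm
    by_contra hne
    exact absurd (h m hmS fun e => hne (by rw [e])) (not_lt.mpr hle)

lemma best_eq {n : ℕ} [NeZero n] {p : Pref n} {S : Finset (Fin n)} {a : Fin n}
    (ha : a ∈ S) (h : ∀ b ∈ S, p a ≤ p b) : best p S = a := by
  unfold best
  rw [argmin_toList ha fun b hb hne =>
    lt_of_le_of_ne (h b hb) fun e => hne (p.injective e).symm]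
  rfl

lemma adjLarger_eq {n : ℕ} {σ : Fin n ≃ Fin n} {S : Finset (Fin n)} {o a : Fin n}
    (ha : a ∈ S) (hlt : σ o < σ a) (h : ∀ b ∈ S, σ o < σ b → σ a ≤ σ b) :
    adjLarger σ S o = a := by
  unfold adjLarger
  rw [argmin_toList (a := a) (by simp [ha, hlt])]
  · rfl
  · intro b hb hne
    rw [Finset.mem_filter] at hb
    exact lt_of_le_of_ne (h b hb.1 hb.2) fun e => hne (σ.injective e).symm

/-- One step of the crawler with explicit witnesses: `b j` is agent `j`'s best remaining object,
`i` is the leaver, and `st'` is the resulting state. -/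
lemma crawlerStep_eq {n : ℕ} [NeZero n] {σ : Fin n ≃ Fin n} {P : Fin n → Pref n}
    {st st' : AlgState n} (b : Fin n → Fin n) (i : Fin n)
    (hb : ∀ j, b j ∈ remObjs st ∧ ∀ o ∈ remObjs st, P j (b j) ≤ P j o)
    (hi : i ∈ remAgents st) (hbi : σ (b i) ≤ σ (heldObj st i))
    (hmin : ∀ j ∈ remAgents st, σ (b j) ≤ σ (heldObj st j) → j ≠ i →
      σ (heldObj st i) < σ (heldObj st j))
    (hres : ∀ j, st'.res j = Function.update st.res i (some (b i)) j)
    (hleave : st'.held i = none)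
    (hcrawl : ∀ j, j ≠ i → (st.held j).isSome = true ∧ σ (b i) ≤ σ (heldObj st j) ∧
        σ (heldObj st j) < σ (heldObj st i) →
      ∃ o ∈ remObjs st, st'.held j = some o ∧ σ (heldObj st j) < σ o ∧
        ∀ o' ∈ remObjs st, σ (heldObj st j) < σ o' → σ o ≤ σ o')
    (hstay : ∀ j, j ≠ i → ¬ ((st.held j).isSome = true ∧ σ (b i) ≤ σ (heldObj st j) ∧
        σ (heldObj st j) < σ (heldObj st i)) → st'.held j = st.held j) :
    crawlerStep σ P st = st' := by
  have hbest : ∀ j, best (P j) (remObjs st) = b j := fun j => best_eq (hb j).1 (hb j).2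
  have hl : leaver σ P st = some i := by
    unfold leaver
    refine argmin_toList ?_ ?_
    · rw [Finset.mem_filter, hbest]
      exact ⟨hi, hbi⟩
    · intro j hj hne
      rw [Finset.mem_filter, hbest] at hj
      exact hmin j hj.1 hj.2 hne
  obtain ⟨held', res'⟩ := st'
  simp only [crawlerStep, hl, hbest, AlgState.mk.injEq]
  refine ⟨funext fun j => ?_, (funext hres).symm⟩
  split_ifs with h1 h2
  · rw [h1]; exact hleave.symm
  · obtain ⟨o, ho, he, hlt, hleast⟩ := hcrawl j h1 h2
    rw [adjLarger_eq ho hlt hleast]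
    exact he.symm
  · exact (hstay j h1 h2).symm

/-! ### The profile `(Q1, Q1, Q2, Q2)` -/

lemma crawler_profile :
    crawler (Equiv.refl (Fin 4)) ![Q1, Q1, Q2, Q2] = ![2, 3, 0, 1] := by
  have h0 : crawlerStep (Equiv.refl (Fin 4)) ![Q1, Q1, Q2, Q2] (crawlerInit 4) =
      ⟨![some 1, some 2, none, some 3], ![none, none, some 0, none]⟩ := by
    apply crawlerStep_eq ![3, 3, 0, 0] 2 <;> decide
  have h1 : crawlerStep (Equiv.refl (Fin 4)) ![Q1, Q1, Q2, Q2]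
      ⟨![some 1, some 2, none, some 3], ![none, none, some 0, none]⟩ =
      ⟨![some 2, some 3, none, none], ![none, none, some 0, some 1]⟩ := by
    apply crawlerStep_eq ![3, 3, 1, 1] 3 <;> decide
  -- Agent `0` holds `2` but prefers `3`, so only agent `1` can leave.
  have h2 : crawlerStep (Equiv.refl (Fin 4)) ![Q1, Q1, Q2, Q2]
      ⟨![some 2, some 3, none, none], ![none, none, some 0, some 1]⟩ =
      ⟨![some 2, none, none, none], ![none, some 3, some 0, some 1]⟩ := by
    apply crawlerStep_eq ![3, 3, 2, 2] 1 <;> decide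
  have h3 : crawlerStep (Equiv.refl (Fin 4)) ![Q1, Q1, Q2, Q2]
      ⟨![some 2, none, none, none], ![none, some 3, some 0, some 1]⟩ =
      ⟨![none, none, none, none], ![some 2, some 3, some 0, some 1]⟩ := by
    apply crawlerStep_eq ![2, 2, 2, 2] 0 <;> decide
  funext i
  simp only [crawler, Function.iterate_succ, Function.iterate_zero, Function.comp_apply, id,
    h0, h1, h2, h3]
  revert i
  decide

lemma profile_mem :
    ∀ i, (![Q1, Q1, Q2, Q2] : Fin 4 → Pref 4) i ∈ spDomain (Equiv.refl (Fin 4)) := by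
  simp only [spDomain, Set.mem_ofPred_eq, singlePeaked, prefers]
  decide

lemma profile_acclaimedPair : acclaimedPair ![Q1, Q1, Q2, Q2] 0 3 := by
  have hA : activeAgents ![Q1, Q1, Q2, Q2] = Finset.univ := by decide
  have h1 : best Q1 Finset.univ = 3 := best_eq (by decide) (by decide)
  have h2 : best Q2 Finset.univ = 0 := best_eq (by decide) (by decide)
  rw [acclaimedPair, hA]
  refine ⟨{2, 3}, {0, 1}, by decide, by decide, by decide, by decide, by decide, by decide, ?_, ?_⟩
  · simp [h2]
  · simp [h1]

theorem crawler_violates_equityBA :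
    (∀ i, (![Q1, Q1, Q2, Q2] : Fin 4 → Pref 4) i ∈ spDomain (Equiv.refl (Fin 4))) ∧
    acclaimedPair ![Q1, Q1, Q2, Q2] 0 3 ∧
    crawler (Equiv.refl (Fin 4)) ![Q1, Q1, Q2, Q2] = ![2, 3, 0, 1] ∧
    crawler (Equiv.refl (Fin 4)) ![Q1, Q1, Q2, Q2] 0 ≠ 3 ∧
    crawler (Equiv.refl (Fin 4)) ![Q1, Q1, Q2, Q2] 3 ≠ 0 ∧
    ¬ EquityBA (spDomain (Equiv.refl (Fin 4))) (crawler (Equiv.refl (Fin 4))) := by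
  have h0 : crawler (Equiv.refl (Fin 4)) ![Q1, Q1, Q2, Q2] 0 ≠ 3 := by
    rw [crawler_profile]; decide
  have h3 : crawler (Equiv.refl (Fin 4)) ![Q1, Q1, Q2, Q2] 3 ≠ 0 := by
    rw [crawler_profile]; decide
  refine ⟨profile_mem, profile_acclaimedPair, crawler_profile, h0, h3, fun h => ?_⟩
  exact (h _ profile_mem 0 3 profile_acclaimedPair).elim h0 h3
end

section
/- Let n ≥ 3 and let P be the unrestricted domain of all strict linear orders over O. Then the top-trading-cycle rule TTC is the unique rule f : P^n → M that is efficient, individually rational and strategy-proof. -/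
/-! ### Certificates for top trading cycles -/

/-- `t` and `μ` certify a top-trading-cycle outcome at `P`: `t i` is the round in which `i` leaves
and `μ i` the object she receives. The objects available in round `t i` are those `j` with
`t i ≤ t j`, and `round` together with `inj` says that each round's traders exchange their own
endowments. -/
structure IsTTC {n : ℕ} (P : Fin n → Pref n) (t : Fin n → ℕ) (μ : Fin n → Fin n) : Prop where
  inj : Function.Injective μ
  round : ∀ i, t (μ i) = t i
  best : ∀ i j, t i ≤ t j → P i (μ i) ≤ P i j

/-- On a finite set, an injective map that sends `S` into `S` permutes `S`, so `S` also contains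
every preimage of its points. -/
lemma mem_of_map_mem {α : Type*} [Finite α] {μ : α → α} (hμ : Function.Injective μ) {S : Set α}
    (hS : ∀ x ∈ S, μ x ∈ S) {x : α} (hx : μ x ∈ S) : x ∈ S := by
  have himg : μ '' S = S := by
    refine Set.eq_of_subset_of_ncard_le (Set.image_subset_iff.2 hS) ?_ (Set.toFinite S)
    rw [Set.ncard_image_of_injective S hμ]
  rw [← himg] at hx
  obtain ⟨y, hy, hyx⟩ := hx
  exact hμ hyx ▸ hy

namespace IsTTC

variable {n : ℕ} {P Q : Fin n → Pref n} {t u : Fin n → ℕ} {μ ν : Fin n → Fin n}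

/-- If an allocation agrees with the certified one on all agents leaving before `i`, then `i`
receives an object of round `t i` or later. -/
lemma le_round (hP : IsTTC P t μ) {m : Fin n → Fin n} (hm : Function.Injective m) (i : Fin n)
    (h : ∀ j, t j < t i → m j = μ j) : t i ≤ t (m i) := by
  by_contra! hlt
  obtain ⟨l, hl⟩ := (Finite.injective_iff_surjective.1 hP.inj) (m i)
  have htl : t l < t i := by rw [← hP.round, hl]; exact hlt
  rw [← h l htl] at hl
  exact absurd (hm hl ▸ htl) (lt_irrefl _)

/-- A certified allocation is determined, up to round `k`, by the preferences of the agents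
leaving before round `k`. -/
lemma agree (hP : IsTTC P t μ) (hQ : IsTTC Q u ν) (k : ℕ)
    (hPQ : ∀ j, t j < k → P j = Q j) : ∀ j, t j < k → ν j = μ j := by
  suffices H : ∀ r s j, t j = r → u j = s → r < k → ν j = μ j from
    fun j hj => H _ _ j rfl rfl hj
  intro r
  induction r using Nat.strong_induction_on with
  | _ r ihr =>
  intro s
  induction s using Nat.strong_induction_on with
  | _ s ihs =>
  intro j htj huj hrk
  -- The agents of round `r` that leave earlier than `j` under `Q` trade along `μ` among
  -- themselves, so `μ j` is not owned by one of them.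
  have hle : s ≤ u (μ j) := by
    by_contra! hlt
    have hmem : j ∈ {l | t l = r ∧ u l < s} := by
      refine mem_of_map_mem hP.inj ?_ ⟨(hP.round j).trans htj, hlt⟩
      rintro l ⟨hl, hls⟩
      refine ⟨(hP.round l).trans hl, ?_⟩
      rw [← ihs (u l) hls l hl rfl hrk, hQ.round]
      exact hls
    exact absurd huj hmem.2.ne
  have h1 : Q j (ν j) ≤ Q j (μ j) := hQ.best j _ (huj ▸ hle)
  have h2 : t j ≤ t (ν j) := hP.le_round hQ.inj j fun l hl =>
    ihr (t l) (htj ▸ hl) _ l rfl rfl ((htj ▸ hl).trans hrk)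
  have h3 := hP.best j _ h2
  rw [hPQ j (htj ▸ hrk)] at h3
  exact (Q j).injective (le_antisymm h1 h3)

lemma unique (hP : IsTTC P t μ) (hQ : IsTTC P u ν) : ν = μ :=
  funext fun j => hP.agree hQ (t j + 1) (fun _ _ => rfl) j (Nat.lt_succ_self _)

lemma irAt (hP : IsTTC P t μ) : IRAt P μ := fun i => hP.best i i le_rfl

lemma effAt (hP : IsTTC P t μ) : EffAt P μ := by
  rintro ⟨m, hm, hdom, j, hj⟩
  have H : ∀ r i, t i = r → m i = μ i := by
    intro r
    induction r using Nat.strong_induction_on with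
    | _ r ih =>
    intro i hi
    have hle := hP.best i _ (hP.le_round hm.1 i fun l hl => ih (t l) (hi ▸ hl) l rfl)
    exact (P i).injective (le_antisymm (hdom i) hle)
  unfold prefers at hj
  rw [H _ j rfl] at hj
  exact lt_irrefl _ hj

lemma weakPref_update {p : Pref n} {i : Fin n} (hP : IsTTC P t μ)
    (hQ : IsTTC (Function.update P i p) u ν) : weakPref (P i) (μ i) (ν i) := by
  refine hP.best i _ (hP.le_round hQ.inj i (hP.agree hQ (t i) fun j hj => ?_))
  have hji : j ≠ i := by rintro rfl; exact lt_irrefl _ hj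
  rw [Function.update_of_ne hji]

end IsTTC

/-! ### The algorithm produces a certificate -/

section Algorithm

variable {n : ℕ} [NeZero n]

lemma best_mem (p : Pref n) {S : Finset (Fin n)} (hS : S.Nonempty) : best p S ∈ S := by
  unfold best
  cases h : S.toList.argmin (fun o => p o) with
  | none => simp [List.argmin_eq_none, hS.ne_empty] at h
  | some a => simpa using List.argmin_mem (f := fun o => p o) h

lemma best_le (p : Pref n) {S : Finset (Fin n)} {o : Fin n} (ho : o ∈ S) :
    p (best p S) ≤ p o := by
  unfold best
  cases h : S.toList.argmin (fun o => p o) with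
  | none =>
    rw [List.argmin_eq_none, Finset.toList_eq_nil] at h
    simp [h] at ho
  | some a => simpa using List.le_of_mem_argmin (f := fun o => p o) (Finset.mem_toList.2 ho) h

/-- The agents that have not left yet. -/
def unassigned (res : Fin n → Option (Fin n)) : Finset (Fin n) :=
  Finset.univ.filter (fun i => res i = none)

/-- The pointing map: each agent points to the owner of her favourite remaining object. -/
noncomputable def pointing (P : Fin n → Pref n) (res : Fin n → Option (Fin n)) : Fin n → Fin n :=
  fun i => best (P i) (unassigned res)

omit [NeZero n] in
lemma mem_unassigned {res : Fin n → Option (Fin n)} {i : Fin n} :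
    i ∈ unassigned res ↔ res i = none := by simp [unassigned]

omit [NeZero n] in
/-- Periods up to `n` detect all periodic points of a self-map of `Fin n`. -/
lemma any_iff_mem_periodicPts (g : Fin n → Fin n) (i : Fin n) :
    (List.range (n + 1)).any (fun k => (k != 0) && (g^[k] i == i)) = true ↔
      i ∈ Function.periodicPts g := by
  simp only [List.any_eq_true, List.mem_range, Bool.and_eq_true, bne_iff_ne, ne_eq, beq_iff_eq]
  constructor
  · rintro ⟨k, -, hk, h⟩
    exact ⟨k, Nat.pos_of_ne_zero hk, h⟩
  · intro h
    refine ⟨Function.minimalPeriod g i, ?_, ?_, Function.isPeriodicPt_minimalPeriod g i⟩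
    · have := Function.minimalPeriod_le_card (f := g) (x := i)
      rw [Fintype.card_fin] at this
      omega
    · exact (Function.minimalPeriod_pos_of_mem_periodicPts h).ne'

lemma ttcStep_of_some {P : Fin n → Pref n} {res : Fin n → Option (Fin n)} {i o : Fin n}
    (h : res i = some o) : ttcStep P res i = some o := by
  simp [ttcStep, h]

open Classical in
lemma ttcStep_of_none {P : Fin n → Pref n} {res : Fin n → Option (Fin n)} {i : Fin n}
    (h : res i = none) : ttcStep P res i =
      if i ∈ Function.periodicPts (pointing P res) then some (pointing P res i) else none := by
  rw [if_congr (any_iff_mem_periodicPts (pointing P res) i).symm rfl rfl]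
  simp only [ttcStep, h]
  rfl

/-- A self-map of a finite type that preserves `S` has a periodic point in `S`. -/
lemma exists_periodic {α : Type*} [Finite α] (g : α → α) (S : Set α) (hg : ∀ x ∈ S, g x ∈ S)
    (hS : S.Nonempty) : ∃ x ∈ S, x ∈ Function.periodicPts g := by
  obtain ⟨x, hx⟩ := hS
  have hit : ∀ k, g^[k] x ∈ S := fun k => by
    induction k with
    | zero => exact hx
    | succ k ih => rw [Function.iterate_succ_apply']; exact hg _ ih
  obtain ⟨a, b, hab, h⟩ := Finite.exists_ne_map_eq_of_infinite (fun k : ℕ => g^[k] x)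
  wlog hlt : a < b generalizing a b
  · exact this b a hab.symm h.symm (by omega)
  refine ⟨g^[a] x, hit a, b - a, by omega, ?_⟩
  change g^[b - a] (g^[a] x) = g^[a] x
  rw [← Function.iterate_add_apply, Nat.sub_add_cancel hlt.le]
  exact h.symm

/-- A round removes at least one agent, since some remaining agent lies on a cycle. -/
lemma card_unassigned_lt (P : Fin n → Pref n) (res : Fin n → Option (Fin n))
    (h : (unassigned res).Nonempty) :
    (unassigned (ttcStep P res)).card < (unassigned res).card := by
  obtain ⟨x, hx, hper⟩ := exists_periodic (pointing P res) (unassigned res : Set (Fin n))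
    (fun x _ => best_mem _ h) h
  refine Finset.card_lt_card (Finset.ssubset_iff_of_subset ?_ |>.2 ⟨x, hx, ?_⟩)
  · intro i hi
    rw [mem_unassigned] at hi ⊢
    by_contra hne
    obtain ⟨o, ho⟩ := Option.ne_none_iff_exists'.1 hne
    rw [ttcStep_of_some ho] at hi
    exact absurd hi (by simp)
  · rw [mem_unassigned, ttcStep_of_none (mem_unassigned.1 hx), if_pos hper]
    simp

/-- The partial allocation after `k` rounds. -/
noncomputable def afterRounds (P : Fin n → Pref n) (k : ℕ) : Fin n → Option (Fin n) :=
  (ttcStep P)^[k] (fun _ => none)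

lemma afterRounds_succ (P : Fin n → Pref n) (k : ℕ) :
    afterRounds P (k + 1) = ttcStep P (afterRounds P k) :=
  Function.iterate_succ_apply' _ _ _

lemma afterRounds_mono {P : Fin n → Pref n} {k l : ℕ} (hkl : k ≤ l) {i o : Fin n}
    (h : afterRounds P k i = some o) : afterRounds P l i = some o := by
  induction l, hkl using Nat.le_induction with
  | base => exact h
  | succ l _ ih => rw [afterRounds_succ]; exact ttcStep_of_some ih

lemma card_afterRounds (P : Fin n → Pref n) (k : ℕ) :
    (unassigned (afterRounds P k)).card ≤ n - k := by
  induction k with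
  | zero => simpa using Finset.card_le_univ (unassigned (afterRounds P 0))
  | succ k ih =>
    rw [afterRounds_succ]
    rcases (unassigned (afterRounds P k)).eq_empty_or_nonempty with h | h
    · have hsub : unassigned (ttcStep P (afterRounds P k)) = ∅ := by
        rw [Finset.eq_empty_iff_forall_notMem] at h ⊢
        intro i hi
        obtain ⟨o, ho⟩ := Option.ne_none_iff_exists'.1 (fun hn => h i (mem_unassigned.2 hn))
        rw [mem_unassigned, ttcStep_of_some ho] at hi
        exact absurd hi (by simp)
      simp [hsub]
    · have := card_unassigned_lt P _ h
      omega

lemma afterRounds_final (P : Fin n → Pref n) (i : Fin n) : afterRounds P n i ≠ none := by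
  intro h
  have hcard := card_afterRounds P n
  rw [Nat.sub_self, Nat.le_zero, Finset.card_eq_zero] at hcard
  simpa [hcard] using mem_unassigned.2 h

/-- The last number of rounds after which `i` is still unassigned is her round. She is then on a
cycle of the pointing map and receives the object she points to. -/
lemma exists_round (P : Fin n → Pref n) (i : Fin n) : ∃ k,
    (∀ l, afterRounds P l i = none ↔ l ≤ k) ∧
      i ∈ Function.periodicPts (pointing P (afterRounds P k)) ∧
      ttc P i = pointing P (afterRounds P k) i := by
  classical
  have hex : ∃ k, afterRounds P k i ≠ none := ⟨n, afterRounds_final P i⟩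
  obtain ⟨k, hk⟩ : ∃ k, Nat.find hex = k + 1 := by
    refine Nat.exists_eq_succ_of_ne_zero fun h0 => ?_
    have := Nat.find_spec hex
    rw [h0] at this
    exact this rfl
  have hnone : afterRounds P k i = none := by
    by_contra h
    have := Nat.find_min' hex h
    omega
  have hsome : afterRounds P (k + 1) i ≠ none := hk ▸ Nat.find_spec hex
  have hper : i ∈ Function.periodicPts (pointing P (afterRounds P k)) := by
    by_contra h
    rw [afterRounds_succ, ttcStep_of_none hnone, if_neg h] at hsome
    exact hsome rfl
  have hval : afterRounds P (k + 1) i = some (pointing P (afterRounds P k) i) := by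
    rw [afterRounds_succ, ttcStep_of_none hnone, if_pos hper]
  have hiff : ∀ l, afterRounds P l i = none ↔ l ≤ k := by
    intro l
    constructor
    · intro h
      by_contra! hlt
      rw [afterRounds_mono hlt hval] at h
      exact absurd h (by simp)
    · intro h
      by_contra hne
      have := Nat.find_min' hex hne
      omega
  refine ⟨k, hiff, hper, ?_⟩
  have hkn : k + 1 ≤ n := by
    by_contra! h
    exact afterRounds_final P i ((hiff n).2 (by omega))
  have := afterRounds_mono hkn hval
  change (afterRounds P n i).getD 0 = _
  rw [this, Option.getD_some]

lemma exists_isTTC (P : Fin n → Pref n) : ∃ t, IsTTC P t (ttc P) := by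
  choose t ht hper hval using exists_round P
  have hmem : ∀ i j, t i ≤ t j ↔ j ∈ unassigned (afterRounds P (t i)) := fun i j => by
    rw [mem_unassigned, ht]
  have hround : ∀ i, t (ttc P i) = t i := by
    intro i
    have hrem : ttc P i ∈ unassigned (afterRounds P (t i)) := by
      rw [hval]
      exact best_mem _ ⟨i, (hmem i i).1 le_rfl⟩
    refine le_antisymm ?_ ((hmem i _).2 hrem)
    -- The object's owner lies on the same cycle, so she leaves in the same round.
    have hper' : ttc P i ∈ Function.periodicPts (pointing P (afterRounds P (t i))) := by
      rw [hval]
      exact (Function.bijOn_periodicPts (f := pointing P (afterRounds P (t i)))).mapsTo (hper i)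
    by_contra! hlt
    have h := (ht (ttc P i) (t i + 1)).2 hlt
    rw [afterRounds_succ, ttcStep_of_none (mem_unassigned.1 hrem), if_pos hper'] at h
    exact absurd h (by simp)
  refine ⟨t, ?_, hround, ?_⟩
  · intro i j hij
    have htij : t i = t j := by rw [← hround i, hij, hround]
    have hj := hper j
    rw [hval i, hval j, htij] at hij
    exact (Function.bijOn_periodicPts (f := pointing P (afterRounds P (t j)))).injOn (htij ▸ hper i) hj hij
  · intro i j hij
    rw [hval]
    exact best_le _ ((hmem i j).1 hij)

end Algorithm

/-! ### Uniqueness -/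

/-- Exchanging the object `x` and the endowment `i` in the ranking of `i`, where `μ i` is preferred
to `x` and `x` to the endowment, keeps the certificate valid. -/
lemma IsTTC.swap {n : ℕ} {P : Fin n → Pref n} {t : Fin n → ℕ} {μ : Fin n → Fin n}
    (hP : IsTTC P t μ) {i x : Fin n} (h1 : P i (μ i) < P i x) (h2 : P i x < P i i) :
    IsTTC (Function.update P i ((P i).trans (Equiv.swap (P i x) (P i i)))) t μ := by
  refine ⟨hP.inj, hP.round, fun j l hjl => ?_⟩
  have hb := hP.best j l hjl
  by_cases hji : j = i
  · subst hji
    rw [Function.update_self]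
    simp only [Equiv.trans_apply]
    rw [Equiv.swap_apply_of_ne_of_ne h1.ne (h1.trans h2).ne]
    rw [Equiv.swap_apply_def]
    split_ifs
    · exact (h1.trans h2).le
    · exact h1.le
    · exact hb
  · rw [Function.update_of_ne hji]
    exact hb

/-- If `f` is strategy-proof and coincides with `ttc` at all profiles of smaller total endowment
rank, an agent who receives less than her certified object keeps her endowment. -/
lemma swap_contra {n : ℕ} [NeZero n] {f : (Fin n → Pref n) → (Fin n → Fin n)}
    (hIR : IndRational (Set.univ : Set (Pref n)) f)
    (hSP : StrategyProof (Set.univ : Set (Pref n)) f) {P : Fin n → Pref n} {t : Fin n → ℕ}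
    (hP : IsTTC P t (ttc P))
    (ih : ∀ Q : Fin n → Pref n,
      ∑ j, (Q j j : ℕ) < ∑ j, (P j j : ℕ) → f Q = ttc Q) {i : Fin n}
    (hi : P i (ttc P i) < P i (f P i)) : f P i = i := by
  by_contra hne
  have hlt : P i (f P i) < P i i :=
    lt_of_le_of_ne (hIR P (fun _ => trivial) i) fun h => hne ((P i).injective h)
  set p : Pref n := (P i).trans (Equiv.swap (P i (f P i)) (P i i)) with hp
  have hQ := hP.swap hi hlt
  rw [← hp] at hQ
  have hpi : p i = P i (f P i) := by simp [hp]
  have hsum : ∑ j, ((Function.update P i p) j j : ℕ) < ∑ j, (P j j : ℕ) := by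
    refine Finset.sum_lt_sum (fun j _ => ?_) ⟨i, Finset.mem_univ i, ?_⟩
    · by_cases hji : j = i
      · subst hji
        rw [Function.update_self, hpi]
        exact hlt.le
      · rw [Function.update_of_ne hji]
    · rw [Function.update_self, hpi]
      exact hlt
  obtain ⟨u, hu⟩ := exists_isTTC (Function.update P i p)
  have hsp : P i (f P i) ≤ P i (f (Function.update P i p) i) :=
    hSP P (fun _ => trivial) i p trivial
  rw [ih _ hsum, hQ.unique hu] at hsp
  exact absurd hi (not_lt.2 hsp)

lemma eq_ttc {n : ℕ} [NeZero n] {f : (Fin n → Pref n) → (Fin n → Fin n)}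
    (hR : IsRule (Set.univ : Set (Pref n)) f) (hE : Efficient (Set.univ : Set (Pref n)) f)
    (hIR : IndRational (Set.univ : Set (Pref n)) f)
    (hSP : StrategyProof (Set.univ : Set (Pref n)) f) (P : Fin n → Pref n) : f P = ttc P := by
  classical
  induction hs : ∑ j, (P j j : ℕ) using Nat.strong_induction_on generalizing P with
  | _ s ih =>
  have ih' : ∀ Q : Fin n → Pref n,
      ∑ j, (Q j j : ℕ) < ∑ j, (P j j : ℕ) → f Q = ttc Q :=
    fun Q hQ => ih _ (hs ▸ hQ) Q rfl
  obtain ⟨t, ht⟩ := exists_isTTC P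
  have hf : Function.Bijective (f P) := hR P (fun _ => trivial)
  by_contra hne
  have hex : ∃ r i, t i = r ∧ f P i ≠ ttc P i := by
    obtain ⟨i, hi⟩ := Function.ne_iff.1 hne
    exact ⟨t i, i, rfl, hi⟩
  obtain ⟨r, ⟨i₀, hi₀, hne₀⟩, hmin⟩ :
      ∃ r, (∃ i, t i = r ∧ f P i ≠ ttc P i) ∧ ∀ j, t j < r → f P j = ttc P j := by
    refine ⟨Nat.find hex, Nat.find_spec hex, fun j hj => ?_⟩
    by_contra h
    exact Nat.find_min hex hj ⟨j, rfl, h⟩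
  have hlt : ∀ i, t i = r → f P i ≠ ttc P i → P i (ttc P i) < P i (f P i) := fun i hi hd =>
    lt_of_le_of_ne (ht.best i _ (ht.le_round hf.1 i fun j hj => hmin j (hi ▸ hj)))
      fun h => hd ((P i).injective h).symm
  have hown : ∀ i, t i = r → f P i ≠ ttc P i → f P i = i := fun i hi hd =>
    swap_contra hIR hSP ht ih' (hlt i hi hd)
  let X : Set (Fin n) := {i | t i = r ∧ f P i ≠ ttc P i}
  have hfX : ∀ i ∈ X, f P i = i := fun i hi => hown i hi.1 hi.2
  -- Apply the permutation argument to the complement: off `X`, `ttc P` stays off `X`, because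
  -- `f P` gives the objects of `X` to their own owners.
  have hback : ∀ i, ttc P i ∈ X → i ∈ X := by
    intro i hi
    refine ⟨(ht.round i).symm.trans hi.1, fun h => ?_⟩
    have hfix : f P i = f P (ttc P i) := h.trans (hfX _ hi).symm
    have hii : i = ttc P i := hf.1 hfix
    apply hi.2
    rw [← hii]
    exact h
  have hfwd : ∀ i ∈ X, ttc P i ∈ X := by
    intro i hi
    by_contra h
    exact mem_of_map_mem ht.inj (S := Xᶜ) (fun x hx hx' => hx (hback x hx')) h hi
  have hfoff : ∀ i, i ∉ X → f P i ∉ X := fun i hi h => by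
    have := hf.1 (hfX _ h)
    exact hi (this ▸ h)
  refine hE P (fun _ => trivial) ⟨fun i => if i ∈ X then ttc P i else f P i, ?_, ?_, i₀, ?_⟩
  · refine Finite.injective_iff_bijective.1 fun i j hij => ?_
    by_cases hi : i ∈ X <;> by_cases hj : j ∈ X <;> simp only [hi, hj, if_true, if_false] at hij
    · exact ht.inj hij
    · exact absurd (hij ▸ hfwd i hi) (hfoff j hj)
    · exact absurd (hij ▸ hfwd j hj) (hfoff i hi)
    · exact hf.1 hij
  · intro i
    by_cases hi : i ∈ X
    · simp only [hi, if_true]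
      exact (hlt i hi.1 hi.2).le
    · simp only [hi, if_false]
      exact le_rfl
  · have hmem : i₀ ∈ X := ⟨hi₀, hne₀⟩
    simp only [hmem, if_true]
    exact hlt i₀ hi₀ hne₀

theorem ttc_unique (n : ℕ) [NeZero n] (hn : 3 ≤ n) :
    (IsRule (Set.univ : Set (Pref n)) ttc ∧ Efficient (Set.univ : Set (Pref n)) ttc ∧
      IndRational (Set.univ : Set (Pref n)) ttc ∧
      StrategyProof (Set.univ : Set (Pref n)) ttc) ∧
    ∀ f : (Fin n → Pref n) → (Fin n → Fin n),
      IsRule (Set.univ : Set (Pref n)) f → Efficient (Set.univ : Set (Pref n)) f →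
      IndRational (Set.univ : Set (Pref n)) f → StrategyProof (Set.univ : Set (Pref n)) f →
      ∀ P, f P = ttc P := by
  refine ⟨⟨fun P _ => ?_, fun P _ => ?_, fun P _ => ?_, fun P _ i p _ => ?_⟩,
    fun f hR hE hIR hSP P => eq_ttc hR hE hIR hSP P⟩ <;> obtain ⟨t, ht⟩ := exists_isTTC P
  · exact Finite.injective_iff_bijective.1 ht.inj
  · exact ht.effAt
  · exact ht.irAt
  · obtain ⟨u, hu⟩ := exists_isTTC (Function.update P i p)
    exact ht.weakPref_update hu
end
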